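/- arXiv:2603.29930 — 2 statements merged into one kernel-verified Lean document; each statement's English description precedes it below -/
import Mathlib

section
/- Let k be a complete nonarchimedean valued field with nontrivial valuation, I a set whose cardinality is not ω₁-measurable, J a set, V and W families of Banach k-vector spaces indexed by I and J, and f : ∏V → ⊕W a nonzero bounded k-linear map. Then for every r ∈ (0,∞) there exist r' > ‖f‖⁻¹ r and finite subsets I₀ ⊆ I, J₀ ⊆ J such that f maps { x ∈ ∏V : x(i) = 0 for all i ∈ I₀, and ‖x(i)‖ ≤ r' for all i } into { y ∈ ⊕W : ‖y(j)‖ ≤ r for all j ∉ J₀ }. -/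
open scoped ENNReal

/-- An ultrafilter is closed under countable intersections (ω₁-complete). -/
def CountablyComplete {α : Type u} (F : Ultrafilter α) : Prop :=
  ∀ s : ℕ → Set α, (∀ n, s n ∈ F) → (⋂ n, s n) ∈ F

/-- A cardinal is ω₁-measurable if it is uncountable and carries a non-principal
ultrafilter closed under countable intersections. -/
def IsOmegaOneMeasurable (c : Cardinal.{u}) : Prop :=
  Cardinal.aleph0 < c ∧
  ∃ (α : Type u) (_ : Cardinal.mk α = c) (F : Ultrafilter α),
    CountablyComplete F ∧ ∀ a : α, F ≠ pure a

/-!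
For a radius `c` with `‖f‖ * c ≤ r`, the sets of coordinates `I₀` that satisfy the conclusion for
some `r' > c` and some finite `J₀`, finiteness of `I₀` aside, form a filter on `I`. Every function
`g : I → ℕ` is bounded along this filter. Otherwise there are vectors `x n`, vanishing on `{g ≤ n}`,
whose images exceed `r` at coordinates `j n` where the images of the earlier `x m` do not; the norms
of the later `x m` can be taken so close to `c` that their images are smaller than that of `x n` at
`j n`. The coordinatewise sum of the `x n` is finite in each coordinate, though it need not converge
in norm; by the ultrametric inequality its image exceeds `r` at each of the infinitely many `j n`,
which is absurd.

Boundedness of all `ℕ`-valued functions passes to finer filters and forces closure under countable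
intersections. So if the filter had no finite member, an ultrafilter finer than both it and the
cofinite filter would make the cardinality of `I` an `ω₁`-measurable cardinal.
-/

open Filter Topology

section Measurable

variable {α : Type*} {l : Filter α}

theorem iInter_mem_of_forall_isBoundedUnder (hl : ∀ g : α → ℕ, l.IsBoundedUnder (· ≤ ·) g)
    {s : ℕ → Set α} (hs : ∀ n, s n ∈ l) : ⋂ n, s n ∈ l := by
  classical
  let firstExit : α → ℕ := fun a => if h : ∃ n, a ∉ s n then Nat.find h else 0
  obtain ⟨b, hb⟩ := hl firstExit
  have hsb : ∀ᶠ a in l, ∀ n ≤ b, a ∈ s n :=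
    (eventually_all_finite (Set.finite_Iic b)).2 fun n _ => hs n
  filter_upwards [eventually_map.1 hb, hsb] with a hab hasb
  by_contra ha
  have hexit : ∃ n, a ∉ s n := by simpa using ha
  rw [show firstExit a = Nat.find hexit from dif_pos hexit] at hab
  exact Nat.find_spec hexit (hasb _ hab)

theorem CountablyComplete.aleph0_lt_mk {F : Ultrafilter α} (hF : CountablyComplete F)
    (hF' : ∀ a, F ≠ pure a) : Cardinal.aleph0 < Cardinal.mk α := by
  by_contra! hα
  have : Countable α := Cardinal.mk_le_aleph0_iff.1 hα
  have : Nonempty α := (F : Filter α).nonempty_of_neBot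
  obtain ⟨e, he⟩ := exists_surjective_nat α
  have hcofinite : (F : Filter α) ≤ cofinite :=
    F.le_cofinite_or_eq_pure.resolve_right fun ⟨a, ha⟩ => hF' a ha
  have hcompl := hF (fun n => {e n}ᶜ) fun n =>
    hcofinite (Set.finite_singleton (e n)).compl_mem_cofinite
  rw [← Set.compl_iUnion, Set.iUnion_singleton_eq_range, he.range_eq, Set.compl_univ] at hcompl
  exact F.empty_notMem hcompl

theorem exists_finite_mem_of_forall_isBoundedUnder (hα : ¬ IsOmegaOneMeasurable (Cardinal.mk α))
    (hl : ∀ g : α → ℕ, l.IsBoundedUnder (· ≤ ·) g) : ∃ s ∈ l, s.Finite := by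
  rw [← disjoint_cofinite_right, disjoint_iff]
  by_contra hne
  have : NeBot (l ⊓ cofinite) := ⟨hne⟩
  let F := Ultrafilter.of (l ⊓ cofinite)
  have hFl : (F : Filter α) ≤ l := (Ultrafilter.of_le _).trans inf_le_left
  have hFcofinite : (F : Filter α) ≤ cofinite := (Ultrafilter.of_le _).trans inf_le_right
  have hF : CountablyComplete F := fun _ =>
    iInter_mem_of_forall_isBoundedUnder fun g => (hl g).mono hFl
  have hF' : ∀ a, F ≠ pure a := fun a ha => by
    have hcompl : {a}ᶜ ∈ F := hFcofinite (Set.finite_singleton a).compl_mem_cofinite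
    simp [ha] at hcompl
  exact hα ⟨hF.aleph0_lt_mk hF', α, rfl, F, hF, hF'⟩

end Measurable

section Restriction

variable {ι : Type*} {V : ι → Type*} [∀ i, NormedAddCommGroup (V i)] {p : ℝ≥0∞}

open scoped Classical in
/-- The restriction of a vector of `lp V p` to the coordinates in `s`, extended by zero to all of
`ι`. -/
noncomputable def lpRestrict (s : Set ι) (x : lp V p) : lp V p :=
  ⟨s.piecewise x 0, (lp.memℓp x).mono' fun i => by by_cases hi : i ∈ s <;> simp [hi]⟩

open scoped Classical in
theorem lpRestrict_apply_of_mem {s : Set ι} {i : ι} (hi : i ∈ s) (x : lp V p) :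
    lpRestrict s x i = x i :=
  Set.piecewise_eq_of_mem _ _ _ hi

open scoped Classical in
theorem lpRestrict_apply_of_notMem {s : Set ι} {i : ι} (hi : i ∉ s) (x : lp V p) :
    lpRestrict s x i = 0 :=
  Set.piecewise_eq_of_notMem _ _ _ hi

theorem lpRestrict_compl_add_lpRestrict (s : Set ι) (x : lp V p) :
    lpRestrict sᶜ x + lpRestrict s x = x := by
  ext i
  by_cases hi : i ∈ s <;>
    simp [hi, lpRestrict_apply_of_mem, lpRestrict_apply_of_notMem]

theorem norm_lpRestrict_le (hp : p ≠ 0) (s : Set ι) (x : lp V p) : ‖lpRestrict s x‖ ≤ ‖x‖ :=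
  lp.norm_mono hp fun i => by
    by_cases hi : i ∈ s <;> simp [hi, lpRestrict_apply_of_mem, lpRestrict_apply_of_notMem]

end Restriction

theorem exists_lp_infty_norm_sub_sum_range_le {ι : Type*} {V : ι → Type*}
    [∀ i, NormedAddCommGroup (V i)] [∀ i, IsUltrametricDist (V i)] {x : ℕ → lp V ∞}
    (hx₀ : ∀ i, ∀ᶠ n in atTop, x n i = 0) (hx : BddAbove (Set.range fun n => ‖x n‖)) :
    ∃ y : lp V ∞, ∀ n B, (∀ m ≥ n, ‖x m‖ ≤ B) → ‖y - ∑ m ∈ Finset.range n, x m‖ ≤ B := by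
  choose N hN using fun i => eventually_atTop.1 (hx₀ i)
  have hcoord : ∀ i (s : Finset ℕ) B, 0 ≤ B → (∀ m ∈ s, ‖x m‖ ≤ B) → ‖∑ m ∈ s, x m i‖ ≤ B :=
    fun i s B hB hsB => IsUltrametricDist.norm_sum_le_of_forall_le_of_nonneg hB fun m hm =>
      (lp.norm_apply_le_norm ENNReal.top_ne_zero _ i).trans (hsB m hm)
  obtain ⟨A, hA⟩ := hx
  have hxA : ∀ n, ‖x n‖ ≤ A := fun n => hA ⟨n, rfl⟩
  let y : lp V ∞ := ⟨fun i => ∑ m ∈ Finset.range (N i), x m i, memℓp_infty ⟨A, by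
    rintro _ ⟨i, rfl⟩
    exact hcoord i _ A ((norm_nonneg _).trans (hxA 0)) fun m _ => hxA m⟩⟩
  refine ⟨y, fun n B hB => ?_⟩
  have hB₀ : 0 ≤ B := (norm_nonneg _).trans (hB n le_rfl)
  refine lp.norm_le_of_forall_le hB₀ fun i => ?_
  have hy : y i = ∑ m ∈ Finset.range (max n (N i)), x m i :=
    Finset.sum_subset (Finset.range_subset_range.2 (le_max_right _ _)) fun m _ hm =>
      hN i m (by simpa using hm)
  have htail : (y - ∑ m ∈ Finset.range n, x m) i = ∑ m ∈ Finset.Ico n (max n (N i)), x m i := by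
    rw [Finset.sum_Ico_eq_sub _ (le_max_left _ _), ← hy, lp.coeFn_sub, lp.coeFn_sum,
      Pi.sub_apply, Finset.sum_apply]
  rw [htail]
  exact hcoord i _ B hB₀ fun m hm => hB m (Finset.mem_Ico.1 hm).1

section GlidingHump

variable {ι κ : Type*} {V : ι → Type*} [∀ i, NormedAddCommGroup (V i)]
  {W : κ → Type*} [∀ j, SeminormedAddCommGroup (W j)]

/-- A gliding hump for `f`: bounded vectors `x n`, only finitely many of them nonzero at each
coordinate, such that the value of `f (x n)` at `j n` exceeds `r`, whereas there the earlier `x m`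
contribute at most `r` and, when `C` is a bound for `f`, the later ones strictly less than
`x n`. -/
structure IsGlidingHump (f : lp V ∞ →+ ∀ j, W j) (C r : ℝ) (x : ℕ → lp V ∞) (j : ℕ → κ) :
    Prop where
  eventually_eq_zero : ∀ i, ∀ᶠ n in atTop, x n i = 0
  bddAbove_norm : BddAbove (Set.range fun n => ‖x n‖)
  lt_norm : ∀ n, r < ‖f (x n) (j n)‖
  norm_le_of_lt : ∀ m n, m < n → ‖f (x m) (j n)‖ ≤ r
  exists_tail_bound : ∀ n, ∃ ρ, C * ρ < ‖f (x n) (j n)‖ ∧ ∀ m > n, ‖x m‖ ≤ ρ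

variable {f : lp V ∞ →+ ∀ j, W j} {C c r : ℝ}

namespace IsGlidingHump

variable {x : ℕ → lp V ∞} {j : ℕ → κ}

theorem injective (h : IsGlidingHump f C r x j) : Function.Injective j :=
  Function.Injective.of_lt_imp_ne fun m n hmn heq =>
    ((h.lt_norm m).trans_le (heq ▸ h.norm_le_of_lt m n hmn)).false

theorem exists_infinite [∀ i, IsUltrametricDist (V i)] [∀ j, IsUltrametricDist (W j)]
    (h : IsGlidingHump f C r x j) (hr : 0 ≤ r) (hC : 0 ≤ C)
    (hfC : ∀ x j, ‖f x j‖ ≤ C * ‖x‖) : ∃ y, {j | r < ‖f y j‖}.Infinite := by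
  obtain ⟨y, hy⟩ := exists_lp_infty_norm_sub_sum_range_le h.eventually_eq_zero h.bddAbove_norm
  refine ⟨y, (Set.infinite_range_of_injective h.injective).mono ?_⟩
  rintro _ ⟨n, rfl⟩
  obtain ⟨ρ, hρ, hxρ⟩ := h.exists_tail_bound n
  let head := ∑ m ∈ Finset.range n, x m
  let tail := y - ∑ m ∈ Finset.range (n + 1), x m
  have hhead : ‖f head (j n)‖ < ‖f (x n) (j n)‖ := by
    refine lt_of_le_of_lt ?_ (h.lt_norm n)
    rw [map_sum, Finset.sum_apply]
    exact IsUltrametricDist.norm_sum_le_of_forall_le_of_nonneg hr fun m hm =>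
      h.norm_le_of_lt m n (Finset.mem_range.1 hm)
  have htail : ‖f tail (j n)‖ < ‖f (x n) (j n)‖ :=
    calc ‖f tail (j n)‖ ≤ C * ‖tail‖ := hfC _ _
      _ ≤ C * ρ := by gcongr; exact hy (n + 1) ρ hxρ
      _ < ‖f (x n) (j n)‖ := hρ
  have hsplit : f y (j n) = (f head (j n) + f tail (j n)) + f (x n) (j n) := by
    have hy_eq : y = head + tail + x n := by
      simp only [head, tail, Finset.sum_range_succ]; abel
    rw [hy_eq, map_add, map_add, Pi.add_apply, Pi.add_apply]
  have hsmall : ‖f head (j n) + f tail (j n)‖ < ‖f (x n) (j n)‖ :=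
    (IsUltrametricDist.norm_add_le_max _ _).trans_lt (max_lt hhead htail)
  have hnorm : ‖f y (j n)‖ = ‖f (x n) (j n)‖ := by
    rw [hsplit, IsUltrametricDist.norm_add_eq_max_of_norm_ne_norm hsmall.ne, max_eq_right hsmall.le]
  exact (h.lt_norm n).trans_eq hnorm.symm

end IsGlidingHump

variable [∀ j, IsUltrametricDist (W j)]

/-- The filter of all sets `s` for which there is a radius `r' > c` such that, at all but finitely
many coordinates, `f` maps the vectors of norm at most `r'` vanishing on `s` to norm at most `r`.
The Chase lemma says that this filter has a finite member. -/
def chaseFilter (f : lp V ∞ →+ ∀ j, W j) (c : ℝ) {r : ℝ} (hr : 0 ≤ r) : Filter ι where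
  sets := {s | ∃ r' > c, ∀ᶠ j in cofinite, ∀ x : lp V ∞,
    (∀ i ∈ s, x i = 0) → ‖x‖ ≤ r' → ‖f x j‖ ≤ r}
  univ_sets := by
    refine ⟨c + 1, lt_add_one c, Eventually.of_forall fun j x hx _ => ?_⟩
    have hx₀ : x = 0 := lp.ext (funext fun i => hx i (Set.mem_univ i))
    simpa [hx₀] using hr
  sets_of_superset := fun ⟨r', hr', h⟩ hst =>
    ⟨r', hr', h.mono fun _ hj x hx => hj x fun i hi => hx i (hst hi)⟩
  inter_sets := by
    rintro s t ⟨r₁, hr₁, h₁⟩ ⟨r₂, hr₂, h₂⟩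
    refine ⟨min r₁ r₂, lt_min hr₁ hr₂, ?_⟩
    filter_upwards [h₁, h₂] with j hj₁ hj₂ x hx hxr
    have hxs (u : Set ι) : ‖lpRestrict u x‖ ≤ min r₁ r₂ :=
      (norm_lpRestrict_le ENNReal.top_ne_zero u x).trans hxr
    have hfs : ‖f (lpRestrict sᶜ x) j‖ ≤ r :=
      hj₁ _ (fun i hi => lpRestrict_apply_of_notMem (Set.notMem_compl_iff.2 hi) x)
        ((hxs _).trans (min_le_left _ _))
    have hft : ‖f (lpRestrict s x) j‖ ≤ r := by
      refine hj₂ _ (fun i hi => ?_) ((hxs _).trans (min_le_right _ _))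
      by_cases his : i ∈ s
      · rw [lpRestrict_apply_of_mem his, hx i ⟨his, hi⟩]
      · exact lpRestrict_apply_of_notMem his x
    rw [← lpRestrict_compl_add_lpRestrict s x, map_add, Pi.add_apply]
    exact (IsUltrametricDist.norm_add_le_max _ _).trans (max_le hfs hft)

theorem mem_chaseFilter {hr : 0 ≤ r} {s : Set ι} :
    s ∈ chaseFilter f c hr ↔ ∃ r' > c, ∀ᶠ j in cofinite, ∀ x : lp V ∞,
      (∀ i ∈ s, x i = 0) → ‖x‖ ≤ r' → ‖f x j‖ ≤ r :=
  Iff.rfl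

theorem exists_hump_of_notMem_chaseFilter {hr : 0 ≤ r} (hcr : C * c ≤ r)
    (hfr : ∀ x, {j | r < ‖f x j‖}.Finite) {s : Set ι} (hs : s ∉ chaseFilter f c hr)
    {Z : Set (lp V ∞)} (hZ : Z.Finite) {σ : ℝ} (hσ : c < σ) :
    ∃ (x : lp V ∞) (j : κ) (ρ : ℝ), (∀ i ∈ s, x i = 0) ∧ ‖x‖ ≤ σ ∧ r < ‖f x j‖ ∧
      (∀ z ∈ Z, ‖f z j‖ ≤ r) ∧ c < ρ ∧ C * ρ < ‖f x j‖ := by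
  have hlarge : ∃ᶠ j in cofinite, ∃ x : lp V ∞, (∀ i ∈ s, x i = 0) ∧ ‖x‖ ≤ σ ∧ r < ‖f x j‖ := by
    by_contra h
    exact hs ⟨σ, hσ, by simpa using h⟩
  have hsmall : ∀ᶠ j in cofinite, ∀ z ∈ Z, ‖f z j‖ ≤ r :=
    (eventually_all_finite hZ).2 fun z _ => by simpa [eventually_cofinite] using hfr z
  obtain ⟨j, ⟨x, hx₀, hxσ, hxj⟩, hjZ⟩ := (hlarge.and_eventually hsmall).exists
  have hnear : ∀ᶠ ρ in 𝓝[>] c, C * ρ < ‖f x j‖ :=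
    nhdsWithin_le_nhds ((continuous_const_mul C).continuousAt.eventually_lt_const
      (hcr.trans_lt hxj))
  obtain ⟨ρ, hρ, hcρ⟩ := (hnear.and self_mem_nhdsWithin).exists
  exact ⟨x, j, ρ, hx₀, hxσ, hxj, hjZ, hcρ, hρ⟩

theorem exists_isGlidingHump (hr : 0 ≤ r) (hcr : C * c ≤ r)
    (hfr : ∀ x, {j | r < ‖f x j‖}.Finite) {g : ι → ℕ}
    (hg : ∀ n, {i | g i ≤ n} ∉ chaseFilter f c hr) : ∃ x j, IsGlidingHump f C r x j := by
  -- A state `(N, ρ, x, j)` records a vector `x` vanishing on `{g ≤ N}`, the coordinate `j` where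
  -- `f x` is large, and a bound `ρ` for all later vectors.
  obtain ⟨s, hs, hs_lt⟩ := exists_seq_of_forall_finset_exists (α := ℕ × ℝ × lp V ∞ × κ)
    (fun (N, ρ, x, j) => c < ρ ∧ C * ρ < ‖f x j‖ ∧ (∀ i, g i ≤ N → x i = 0) ∧ ‖x‖ ≤ c + 1 ∧
      r < ‖f x j‖)
    (fun (N, ρ, x, _) (N', _, x', j') => N < N' ∧ ‖x'‖ ≤ ρ ∧ ‖f x j'‖ ≤ r) fun t ht => by
      obtain ⟨N, hN⟩ := ((eventually_all_finset t).2 fun a _ => eventually_gt_atTop a.1).exists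
      have hbound : ∀ᶠ σ in 𝓝[>] c, σ ≤ c + 1 ∧ ∀ a ∈ t, σ ≤ a.2.1 :=
        nhdsWithin_le_nhds ((eventually_le_nhds (lt_add_one c)).and
          ((eventually_all_finset t).2 fun a ha => eventually_le_nhds (ht a ha).1))
      obtain ⟨σ, ⟨hσ, hσt⟩, hcσ⟩ := (hbound.and self_mem_nhdsWithin).exists
      obtain ⟨x, j, ρ, hx₀, hxσ, hxj, hjt, hcρ, hρ⟩ := exists_hump_of_notMem_chaseFilter hcr hfr
        (hg N) (t.finite_toSet.image fun a => a.2.2.1) hcσ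
      exact ⟨(N, ρ, x, j), ⟨hcρ, hρ, hx₀, hxσ.trans hσ, hxj⟩,
        fun a ha => ⟨hN a ha, hxσ.trans (hσt a ha), hjt _ ⟨a, ha, rfl⟩⟩⟩
  choose _ hρ hx₀ hx_le hlt using hs
  have hN : StrictMono fun n => (s n).1 := fun m n hmn => (hs_lt m n hmn).1
  exact ⟨fun n => (s n).2.2.1, fun n => (s n).2.2.2,
    { eventually_eq_zero := fun i => (hN.tendsto_atTop.eventually_ge_atTop (g i)).mono
        fun n hn => hx₀ n i hn
      bddAbove_norm := ⟨c + 1, Set.forall_mem_range.2 hx_le⟩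
      lt_norm := hlt
      norm_le_of_lt := fun m n hmn => (hs_lt m n hmn).2.2
      exists_tail_bound := fun n => ⟨(s n).2.1, hρ n, fun m hm => (hs_lt n m hm).2.1⟩ }⟩

theorem isBoundedUnder_chaseFilter [∀ i, IsUltrametricDist (V i)] (hr : 0 ≤ r) (hC : 0 ≤ C)
    (hfC : ∀ x j, ‖f x j‖ ≤ C * ‖x‖) (hcr : C * c ≤ r) (hfr : ∀ x, {j | r < ‖f x j‖}.Finite)
    (g : ι → ℕ) : (chaseFilter f c hr).IsBoundedUnder (· ≤ ·) g := by
  by_contra hg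
  have hg' : ∀ n, {i | g i ≤ n} ∉ chaseFilter f c hr := fun n hn => hg ⟨n, eventually_map.2 hn⟩
  obtain ⟨x, j, hump⟩ := exists_isGlidingHump hr hcr hfr hg'
  obtain ⟨y, hy⟩ := hump.exists_infinite hr hC hfC
  exact hy (hfr y)

theorem nonarchimedean_chase_lemma_dugas_zimmermann_huisgen_general
    [∀ i, IsUltrametricDist (V i)] (hι : ¬ IsOmegaOneMeasurable (Cardinal.mk ι))
    (f : lp V ∞ →+ ∀ j, W j) {C c r : ℝ} (hC : 0 ≤ C) (hfC : ∀ x j, ‖f x j‖ ≤ C * ‖x‖)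
    (hc : 0 ≤ c) (hcr : C * c ≤ r) (hfr : ∀ x, {j | r < ‖f x j‖}.Finite) :
    ∃ r' : ℝ, c < r' ∧ ∃ I₀ : Set ι, I₀.Finite ∧ ∃ J₀ : Set κ, J₀.Finite ∧
      ∀ x : lp V ∞, (∀ i ∈ I₀, x i = 0) → (∀ i, ‖x i‖ ≤ r') → ∀ j ∉ J₀, ‖f x j‖ ≤ r := by
  have hr : 0 ≤ r := (mul_nonneg hC hc).trans hcr
  obtain ⟨I₀, hI₀, hI₀_fin⟩ := exists_finite_mem_of_forall_isBoundedUnder hι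
    (isBoundedUnder_chaseFilter hr hC hfC hcr hfr)
  obtain ⟨r', hr', hJ₀⟩ := mem_chaseFilter.1 hI₀
  refine ⟨r', hr', I₀, hI₀_fin, _, eventually_cofinite.1 hJ₀, fun x hx hxr' j hj => ?_⟩
  exact not_not.1 hj x hx (lp.norm_le_of_forall_le (hc.trans hr'.le) hxr')

end GlidingHump

theorem nonarchimedean_chase_lemma_dugas_zimmermann_huisgen
    {k : Type*} [NontriviallyNormedField k] [CompleteSpace k] [IsUltrametricDist k]
    {I J : Type u}
    (hI : ¬ IsOmegaOneMeasurable (Cardinal.mk I))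
    (V : I → Type*) [∀ i, NormedAddCommGroup (V i)] [∀ i, NormedSpace k (V i)]
    [∀ i, CompleteSpace (V i)] [∀ i, IsUltrametricDist (V i)]
    (W : J → Type*) [∀ j, NormedAddCommGroup (W j)] [∀ j, NormedSpace k (W j)]
    [∀ j, CompleteSpace (W j)] [∀ j, IsUltrametricDist (W j)]
    (f : lp V ∞ →L[k] lp W ∞)
    (hf_range : ∀ x : lp V ∞, ∀ ε > (0 : ℝ), {j : J | ε < ‖f x j‖}.Finite)
    (hf_ne : f ≠ 0) :
    ∀ r : ℝ, 0 < r →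
      ∃ r' : ℝ, ‖f‖⁻¹ * r < r' ∧
        ∃ I₀ : Set I, I₀.Finite ∧ ∃ J₀ : Set J, J₀.Finite ∧
          ∀ x : lp V ∞, (∀ i ∈ I₀, x i = 0) → (∀ i, ‖x i‖ ≤ r') →
            ∀ j ∉ J₀, ‖f x j‖ ≤ r := by
  intro r hr
  exact nonarchimedean_chase_lemma_dugas_zimmermann_huisgen_general hI
    ((lp.coeFnAddMonoidHom W ∞).comp f.toLinearMap.toAddMonoidHom) (norm_nonneg f)
    (fun x j => (lp.norm_apply_le_norm ENNReal.top_ne_zero _ j).trans (f.le_opNorm x))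
    (by positivity) (mul_inv_cancel_left₀ (norm_ne_zero_iff.2 hf_ne) r).le
    fun x => hf_range x r hr
end

section
/- Let k be a complete nonarchimedean valued field with nontrivial valuation whose value group |k^×| is dense in ℝ_{>0}, let I be a set whose cardinality is not ω₁-measurable, J a set, V and W families of Banach k-vector spaces, and f : ∏V → ⊕W a nonzero bounded k-linear map. Then there exist finite subsets I₀ ⊆ I and J₀ ⊆ J such that the operator norm of the induced map f↾^{I₀,J₀} (the composite of the inclusion of the sub-product of ∏V supported off I₀ with f followed by the projection of ⊕W killing the coordinates in J₀) is strictly smaller than ‖f‖. -/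
open scoped ENNReal

/-!
The sets `A ⊆ I` of coordinates whose vanishing lowers the norm of `f`, after finitely many
coordinates of `J` are discarded, form a filter: this is where the ultrametric inequality on the
target enters. The theorem says that this filter contains a finite set. If it does not, it is
refined by a non-principal ultrafilter, and we contradict non-measurability by showing that every
ultrafilter refining it is countably complete.

Countable completeness reduces to a gliding hump. Suppose that the sets `S n` form a point-finite
sequence and that no `(S n)ᶜ` lowers the norm of `f`. Since the value group is dense, there are
vectors `x n` supported on `S n`, with norms bounded by a strictly decreasing sequence with limit
`1`, and distinct coordinates `j n` at which `f (x n)` dominates the values of `f` at the earlier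
`x m` and at the tail `∑ m > n, x m`. Then `f (∑ n, x n)` has norm larger than `‖f‖` at every `j n`,
so it does not lie in `⊕ W`.
-/

section Ultrafilter

open Filter

variable {α : Type*}

theorem countablyComplete_of_forall_exists_infinite {F : Ultrafilter α}
    (h : ∀ S : ℕ → Set α, (∀ n, S n ∈ F) → ∃ a, {n | a ∈ S n}.Infinite) :
    CountablyComplete F := by
  intro s hs
  by_contra hs_inter
  obtain ⟨a, ha⟩ := h (fun n => (⋂ m ∈ Finset.range n, s m) ∩ (⋂ m, s m)ᶜ) fun n =>
    inter_mem ((biInter_finset_mem _).2 fun m _ => hs m)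
      (Ultrafilter.compl_mem_iff_notMem.2 hs_inter)
  obtain ⟨_, -, ha_notMem⟩ := ha.nonempty
  refine ha_notMem (Set.mem_iInter.2 fun m => ?_)
  obtain ⟨n, ⟨ha_mem, -⟩, hmn⟩ := ha.exists_gt m
  exact Set.mem_iInter₂.1 ha_mem m (Finset.mem_range.2 hmn)

theorem CountablyComplete.exists_eq_pure_of_countable [Countable α] {F : Ultrafilter α}
    (hF : CountablyComplete F) : ∃ a, F = pure a := by
  refine F.le_cofinite_or_eq_pure.resolve_left fun hle => ?_
  have : Nonempty α := F.neBot.nonempty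
  obtain ⟨e, he⟩ := exists_surjective_nat α
  have h_empty : ⋂ n, ({e n}ᶜ : Set α) = ∅ := by
    rw [← Set.compl_iUnion, Set.iUnion_singleton_eq_range, he.range_eq, Set.compl_univ]
  exact F.empty_notMem (h_empty ▸ hF _ fun n => hle (Set.finite_singleton (e n)).compl_mem_cofinite)

theorem CountablyComplete.exists_eq_pure (hα : ¬ IsOmegaOneMeasurable (Cardinal.mk α))
    {F : Ultrafilter α} (hF : CountablyComplete F) : ∃ a, F = pure a := by
  by_cases hcard : Cardinal.mk α ≤ Cardinal.aleph0
  · have : Countable α := Cardinal.mk_le_aleph0_iff.1 hcard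
    exact hF.exists_eq_pure_of_countable
  · by_contra! hne
    exact hα ⟨not_le.1 hcard, α, rfl, F, hF, hne⟩

theorem exists_finite_mem_of_forall_pointFinite (hα : ¬ IsOmegaOneMeasurable (Cardinal.mk α))
    {l : Filter α}
    (hl : ∀ S : ℕ → Set α, (∀ a, {n | a ∈ S n}.Finite) → ∃ n, (S n)ᶜ ∈ l) :
    ∃ s ∈ l, s.Finite := by
  rw [← disjoint_cofinite_right]
  by_contra hdisj
  have : (l ⊓ cofinite).NeBot := ⟨fun hbot => hdisj (disjoint_iff.2 hbot)⟩
  obtain ⟨U, hU⟩ := Ultrafilter.exists_le (l ⊓ cofinite)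
  have hU_complete : CountablyComplete U := by
    refine countablyComplete_of_forall_exists_infinite fun S hS => ?_
    by_contra! hfin
    obtain ⟨n, hn⟩ := hl S hfin
    exact Ultrafilter.compl_mem_iff_notMem.1 (hU (mem_inf_of_left hn)) (hS n)
  obtain ⟨a, rfl⟩ := hU_complete.exists_eq_pure hα
  exact hU (mem_inf_of_right (Set.finite_singleton a).compl_mem_cofinite) rfl

end Ultrafilter

theorem exists_seq_forall_lt_notMem {α β : Type*} {F : α → Set β} (hF : ∀ a, (F a).Finite)
    {P : ℕ → α → β → Prop} (hP : ∀ n (T : Set β), T.Finite → ∃ a, ∃ b ∉ T, P n a b) :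
    ∃ (a : ℕ → α) (b : ℕ → β),
      (∀ n, P n (a n) (b n)) ∧ ∀ m n, m < n → b n ∉ F (a m) := by
  choose a b hb hab using fun n (T : {T : Set β // T.Finite}) => hP n T T.2
  let T : ℕ → {T : Set β // T.Finite} := fun n =>
    Nat.rec ⟨∅, Set.finite_empty⟩ (fun n T => ⟨T ∪ F (a n T), T.2.union (hF _)⟩) n
  have hT_mono : Monotone T := monotone_nat_of_le_succ fun _ => Set.subset_union_left
  refine ⟨fun n => a n (T n), fun n => b n (T n), fun n => hab n (T n), fun m n hmn hmem => ?_⟩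
  exact hb n (T n) (hT_mono (Nat.succ_le_of_lt hmn) (Or.inr hmem))

theorem exists_lt_norm_smul_lt (k : Type*) {E : Type*} [DenselyNormedField k]
    [NormedAddCommGroup E] [NormedSpace k E] {x : E} (hx : x ≠ 0) {r s : ℝ} (hr : 0 ≤ r)
    (hrs : r < s) : ∃ a : k, r < ‖a • x‖ ∧ ‖a • x‖ < s := by
  have hx_pos : 0 < ‖x‖ := norm_pos_iff.2 hx
  obtain ⟨a, hra, has⟩ := NormedField.exists_lt_norm_lt k (r₁ := r / ‖x‖) (r₂ := s / ‖x‖)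
    (by positivity) (by gcongr)
  refine ⟨a, ?_, ?_⟩ <;> rw [norm_smul]
  exacts [(div_lt_iff₀ hx_pos).1 hra, (lt_div_iff₀ hx_pos).1 has]

theorem lt_norm_add_of_norm_le_of_lt_norm {E : Type*} [SeminormedAddCommGroup E]
    [IsUltrametricDist E] {x y : E} {t : ℝ} (hy : ‖y‖ ≤ t) (hx : t < ‖x‖) : t < ‖x + y‖ :=
  calc t < max ‖x‖ ‖y‖ := lt_max_of_lt_left hx
    _ = ‖x + y‖ := (IsUltrametricDist.norm_add_eq_max_of_norm_ne_norm (hy.trans_lt hx).ne').symm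

section Lp

variable {I : Type*} {V : I → Type*} [∀ i, NormedAddCommGroup (V i)] {p : ℝ≥0∞}

open Classical in
/-- The truncation of `x : lp V p` to a set `A` of coordinates: it agrees with `x` on `A` and is
zero off `A`. As `Set.indicator` is only available for non-dependent functions, it is built from
`Set.piecewise`. -/
noncomputable def lpIndicator (A : Set I) (x : lp V p) : lp V p :=
  ⟨A.piecewise x 0, (lp.memℓp x).mono' fun i => by by_cases hi : i ∈ A <;> simp [hi]⟩

theorem lpIndicator_apply_of_mem {A : Set I} {i : I} (hi : i ∈ A) (x : lp V p) :
    lpIndicator A x i = x i := by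
  classical exact Set.piecewise_eq_of_mem _ _ _ hi

theorem lpIndicator_apply_of_notMem {A : Set I} {i : I} (hi : i ∉ A) (x : lp V p) :
    lpIndicator A x i = 0 := by
  classical exact Set.piecewise_eq_of_notMem _ _ _ hi

theorem lpIndicator_compl_add (A : Set I) (x : lp V p) :
    lpIndicator Aᶜ x + lpIndicator A x = x := by
  ext i
  rw [lp.coeFn_add, Pi.add_apply]
  by_cases hi : i ∈ A
  · rw [lpIndicator_apply_of_notMem (Set.notMem_compl_iff.2 hi), lpIndicator_apply_of_mem hi,
      zero_add]
  · rw [lpIndicator_apply_of_mem (Set.mem_compl hi), lpIndicator_apply_of_notMem hi, add_zero]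

theorem norm_lpIndicator_le (hp : p ≠ 0) (A : Set I) (x : lp V p) : ‖lpIndicator A x‖ ≤ ‖x‖ := by
  refine lp.norm_mono hp fun i => ?_
  by_cases hi : i ∈ A
  · rw [lpIndicator_apply_of_mem hi]
  · rw [lpIndicator_apply_of_notMem hi, norm_zero]
    exact norm_nonneg _

theorem exists_lp_top_forall_apply_eq_tsum [∀ i, IsUltrametricDist (V i)] {ι : Type*}
    {x : ι → lp V ∞} {C : ℝ} (hC : 0 ≤ C) (hx : ∀ m, ‖x m‖ ≤ C) :
    ∃ y : lp V ∞, (∀ i, y i = ∑' m, x m i) ∧ ‖y‖ ≤ C := by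
  have h_bound : ∀ i, ‖∑' m, x m i‖ ≤ C := fun i =>
    IsUltrametricDist.norm_tsum_le_of_forall_le_of_nonneg hC fun m =>
      (lp.norm_apply_le_norm ENNReal.top_ne_zero (x m) i).trans (hx m)
  exact ⟨⟨fun i => ∑' m, x m i, memℓp_infty ⟨C, Set.forall_mem_range.2 h_bound⟩⟩, fun _ => rfl,
    lp.norm_le_of_forall_le hC h_bound⟩

end Lp

section NormReduction

variable {k I J : Type*} [NontriviallyNormedField k]
  {V : I → Type*} [∀ i, NormedAddCommGroup (V i)] [∀ i, NormedSpace k (V i)]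
  {W : J → Type*} [∀ j, NormedAddCommGroup (W j)] [∀ j, NormedSpace k (W j)]
  {f : lp V ∞ →L[k] lp W ∞}

/-- The set `A ⊆ I` reduces the norm of `f` if the map `f ↾^{A,J₀}` has norm smaller than `‖f‖` for
some finite `J₀ ⊆ J`. As in the theorem, this norm is expressed by a bound `c < ‖f‖`. -/
def ReducesNorm (f : lp V ∞ →L[k] lp W ∞) (A : Set I) : Prop :=
  ∃ J₀ : Set J, J₀.Finite ∧ ∃ c : ℝ, 0 ≤ c ∧ c < ‖f‖ ∧
    ∀ x : lp V ∞, (∀ i ∈ A, x i = 0) → ∀ j ∉ J₀, ‖f x j‖ ≤ c * ‖x‖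

theorem ReducesNorm.mono {A B : Set I} (hA : ReducesNorm f A) (hAB : A ⊆ B) :
    ReducesNorm f B := by
  obtain ⟨J₀, hJ₀, c, hc₀, hcf, hc⟩ := hA
  exact ⟨J₀, hJ₀, c, hc₀, hcf, fun x hx => hc x fun i hi => hx i (hAB hi)⟩

theorem reducesNorm_univ (hf : f ≠ 0) : ReducesNorm f Set.univ := by
  refine ⟨∅, Set.finite_empty, 0, le_rfl, norm_pos_iff.2 hf, fun x hx j _ => ?_⟩
  have hx₀ : x = 0 := by
    ext i
    exact hx i (Set.mem_univ i)
  simp [hx₀]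

theorem ReducesNorm.inter [∀ j, IsUltrametricDist (W j)] {A B : Set I} (hA : ReducesNorm f A)
    (hB : ReducesNorm f B) : ReducesNorm f (A ∩ B) := by
  obtain ⟨J₁, hJ₁, c₁, hc₁, hc₁f, hA⟩ := hA
  obtain ⟨J₂, hJ₂, c₂, hc₂, hc₂f, hB⟩ := hB
  refine ⟨J₁ ∪ J₂, hJ₁.union hJ₂, max c₁ c₂, le_max_of_le_left hc₁, max_lt hc₁f hc₂f,
    fun x hx j hj => ?_⟩
  rw [Set.mem_union, not_or] at hj
  have h_compl : ‖f (lpIndicator Aᶜ x) j‖ ≤ c₁ * ‖lpIndicator Aᶜ x‖ :=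
    hA _ (fun i hi => lpIndicator_apply_of_notMem (Set.notMem_compl_iff.2 hi) x) j hj.1
  have h_self : ‖f (lpIndicator A x) j‖ ≤ c₂ * ‖lpIndicator A x‖ := by
    refine hB _ (fun i hiB => ?_) j hj.2
    by_cases hiA : i ∈ A
    · rw [lpIndicator_apply_of_mem hiA, hx i ⟨hiA, hiB⟩]
    · exact lpIndicator_apply_of_notMem hiA x
  calc ‖f x j‖ = ‖f (lpIndicator Aᶜ x) j + f (lpIndicator A x) j‖ := by
        rw [← Pi.add_apply, ← lp.coeFn_add, ← map_add, lpIndicator_compl_add]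
    _ ≤ max ‖f (lpIndicator Aᶜ x) j‖ ‖f (lpIndicator A x) j‖ :=
        IsUltrametricDist.norm_add_le_max _ _
    _ ≤ max (c₁ * ‖x‖) (c₂ * ‖x‖) := by
        gcongr
        · exact h_compl.trans (by gcongr; exact norm_lpIndicator_le ENNReal.top_ne_zero _ x)
        · exact h_self.trans (by gcongr; exact norm_lpIndicator_le ENNReal.top_ne_zero _ x)
    _ = max c₁ c₂ * ‖x‖ := (max_mul_of_nonneg _ _ (norm_nonneg x)).symm

/-- The filter of sets of coordinates that reduce the norm of `f`. -/
def normReductionFilter [∀ j, IsUltrametricDist (W j)] (f : lp V ∞ →L[k] lp W ∞) (hf : f ≠ 0) :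
    Filter I where
  sets := {A | ReducesNorm f A}
  univ_sets := reducesNorm_univ hf
  sets_of_superset := ReducesNorm.mono
  inter_sets := ReducesNorm.inter

theorem exists_forall_lt_norm_apply_of_diagonal [∀ i, IsUltrametricDist (V i)]
    [∀ j, IsUltrametricDist (W j)] {x : ℕ → lp V ∞} (hx : ∀ i, Summable fun n => x n i)
    {r : ℕ → ℝ} (hr : Antitone r) (hxr : ∀ n, ‖x n‖ ≤ r n) {j : ℕ → J}
    (h_diag : ∀ n, ‖f‖ * r (n + 1) < ‖f (x n) (j n)‖)
    (h_lower : ∀ m n, m < n → ‖f (x m) (j n)‖ ≤ ‖f‖ * r (n + 1)) :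
    ∃ y : lp V ∞, ∀ n, ‖f‖ * r (n + 1) < ‖f y (j n)‖ := by
  have hr₀ : ∀ n, 0 ≤ r n := fun n => (norm_nonneg _).trans (hxr n)
  choose tail h_tail h_tail_norm using fun n =>
    exists_lp_top_forall_apply_eq_tsum (hr₀ n) (x := fun m => x (m + n))
      fun m => (hxr _).trans (hr (Nat.le_add_left n m))
  have h_split : ∀ n, tail 0 = ∑ m ∈ Finset.range n, x m + x n + tail (n + 1) := by
    intro n
    ext i
    rw [← Finset.sum_range_succ, lp.coeFn_add, Pi.add_apply, lp.coeFn_sum, Finset.sum_apply,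
      h_tail, h_tail]
    exact ((hx i).sum_add_tsum_nat_add (n + 1)).symm
  refine ⟨tail 0, fun n => ?_⟩
  let φ : lp V ∞ →L[k] W (j n) := (lp.evalCLM k W ∞ (j n)).comp f
  have h_head_le : ‖φ (∑ m ∈ Finset.range n, x m)‖ ≤ ‖f‖ * r (n + 1) := by
    rw [map_sum]
    exact IsUltrametricDist.norm_sum_le_of_forall_le_of_nonneg
      (mul_nonneg (norm_nonneg f) (hr₀ _)) fun m hm => h_lower m n (Finset.mem_range.1 hm)
  have h_tail_le : ‖φ (tail (n + 1))‖ ≤ ‖f‖ * r (n + 1) :=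
    (lp.norm_apply_le_norm ENNReal.top_ne_zero _ _).trans (f.le_opNorm_of_le (h_tail_norm (n + 1)))
  have h_rest_le : ‖φ (∑ m ∈ Finset.range n, x m) + φ (tail (n + 1))‖ ≤ ‖f‖ * r (n + 1) :=
    (IsUltrametricDist.norm_add_le_max _ _).trans (max_le h_head_le h_tail_le)
  calc ‖f‖ * r (n + 1)
      < ‖φ (x n) + (φ (∑ m ∈ Finset.range n, x m) + φ (tail (n + 1)))‖ :=
        lt_norm_add_of_norm_le_of_lt_norm h_rest_le (h_diag n)
    _ = ‖φ (tail 0)‖ := by rw [h_split n, map_add, map_add, add_left_comm, add_assoc]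

end NormReduction

section DenselyNormed

variable {k I J : Type*} [DenselyNormedField k]
  {V : I → Type*} [∀ i, NormedAddCommGroup (V i)] [∀ i, NormedSpace k (V i)]
  {W : J → Type*} [∀ j, NormedAddCommGroup (W j)] [∀ j, NormedSpace k (W j)]
  {f : lp V ∞ →L[k] lp W ∞}

theorem exists_lt_norm_apply_of_not_reducesNorm {A : Set I} (hA : ¬ ReducesNorm f A) (hf : f ≠ 0)
    {r s : ℝ} (hr : 0 ≤ r) (hrs : r < s) {J₀ : Set J} (hJ₀ : J₀.Finite) :
    ∃ x : lp V ∞, ∃ j ∉ J₀, (∀ i ∈ A, x i = 0) ∧ ‖x‖ ≤ s ∧ ‖f‖ * r < ‖f x j‖ := by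
  obtain ⟨t, hrt, hts⟩ := exists_between hrs
  have ht : 0 < t := hr.trans_lt hrt
  simp only [ReducesNorm] at hA
  push Not at hA
  obtain ⟨x, hxA, j, hj, hxj⟩ := hA J₀ hJ₀ (‖f‖ * (r / t)) (by positivity)
    (mul_lt_of_lt_one_right (norm_pos_iff.2 hf) ((div_lt_one ht).2 hrt))
  have hx : x ≠ 0 := by
    rintro rfl
    simp at hxj
  obtain ⟨a, hta, has⟩ := exists_lt_norm_smul_lt k hx ht.le hts
  have ha : 0 < ‖a‖ := pos_of_mul_pos_left (norm_smul a x ▸ ht.trans hta) (norm_nonneg x)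
  refine ⟨a • x, j, hj, fun i hi => ?_, has.le, ?_⟩
  · rw [lp.coeFn_smul, Pi.smul_apply, hxA i hi, smul_zero]
  · calc ‖f‖ * r = ‖f‖ * (r / t) * t := by field_simp
      _ ≤ ‖f‖ * (r / t) * ‖a • x‖ := by gcongr
      _ = ‖a‖ * (‖f‖ * (r / t) * ‖x‖) := by rw [norm_smul]; ring
      _ < ‖a‖ * ‖f x j‖ := by gcongr
      _ = ‖f (a • x) j‖ := by rw [map_smul, lp.coeFn_smul, Pi.smul_apply, norm_smul]

theorem exists_reducesNorm_compl_of_pointFinite [∀ i, IsUltrametricDist (V i)]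
    [∀ j, IsUltrametricDist (W j)]
    (hf_fin : ∀ x : lp V ∞, {j : J | ‖f‖ < ‖f x j‖}.Finite) (hf : f ≠ 0)
    {S : ℕ → Set I} (hS : ∀ i, {n | i ∈ S n}.Finite) : ∃ n, ReducesNorm f (S n)ᶜ := by
  by_contra! h_not
  obtain ⟨r, hr_anti, hr_one, -⟩ := exists_seq_strictAnti_tendsto (1 : ℝ)
  have hr_le : ∀ n, ‖f‖ ≤ ‖f‖ * r n := fun n => le_mul_of_one_le_right (norm_nonneg f) (hr_one n).le
  obtain ⟨x, j, hxj, h_lower⟩ := exists_seq_forall_lt_notMem hf_fin fun n J₀ hJ₀ =>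
    exists_lt_norm_apply_of_not_reducesNorm (h_not n) hf
      (zero_le_one.trans (hr_one (n + 1)).le) (hr_anti n.lt_succ_self) hJ₀
  choose hx_supp hx_norm h_diag using hxj
  simp only [Set.mem_ofPred_eq, not_lt] at h_lower
  have hj_inj : Function.Injective j := .of_lt_imp_ne fun m n hmn hj =>
    ((hr_le (m + 1)).trans_lt (h_diag m)).not_ge (hj ▸ h_lower m n hmn)
  have hx_summable : ∀ i, Summable fun n => x n i := fun i =>
    summable_of_hasFiniteSupport ((hS i).subset fun n hn => by
      by_contra hi
      exact hn (hx_supp n i hi))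
  obtain ⟨y, hy⟩ := exists_forall_lt_norm_apply_of_diagonal hx_summable hr_anti.antitone hx_norm
    h_diag fun m n hmn => (h_lower m n hmn).trans (hr_le (n + 1))
  exact Set.infinite_of_injective_forall_mem hj_inj (fun n => (hr_le (n + 1)).trans_lt (hy n))
    (hf_fin y)

end DenselyNormed

theorem nonarchimedean_chase_operator_norm_reduction_general
    {k I J : Type*} [DenselyNormedField k] (hI : ¬ IsOmegaOneMeasurable (Cardinal.mk I))
    {V : I → Type*} [∀ i, NormedAddCommGroup (V i)] [∀ i, NormedSpace k (V i)]
    [∀ i, IsUltrametricDist (V i)]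
    {W : J → Type*} [∀ j, NormedAddCommGroup (W j)] [∀ j, NormedSpace k (W j)]
    [∀ j, IsUltrametricDist (W j)]
    (f : lp V ∞ →L[k] lp W ∞)
    (hf_range : ∀ x : lp V ∞, ∀ ε > (0 : ℝ), {j : J | ε < ‖f x j‖}.Finite)
    (hf_ne : f ≠ 0) :
    ∃ I₀ : Set I, I₀.Finite ∧ ∃ J₀ : Set J, J₀.Finite ∧
      ∃ c : ℝ, 0 ≤ c ∧ c < ‖f‖ ∧
        ∀ x : lp V ∞, (∀ i ∈ I₀, x i = 0) →
          ∀ j ∉ J₀, ‖f x j‖ ≤ c * ‖x‖ := by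
  obtain ⟨I₀, hI₀_mem, hI₀_fin⟩ :=
    exists_finite_mem_of_forall_pointFinite hI (l := normReductionFilter f hf_ne)
      fun _ hS => exists_reducesNorm_compl_of_pointFinite
        (fun x => hf_range x ‖f‖ (norm_pos_iff.2 hf_ne)) hf_ne hS
  exact ⟨I₀, hI₀_fin, hI₀_mem⟩

/-- Operator norm reduction: the induced map `f ↾^{I₀,J₀}` (restriction of `f` to the
sub-product supported off `I₀`, followed by the projection of `⊕ W` killing the
coordinates in `J₀`) has operator norm strictly smaller than `‖f‖`, expressed via a
bounding constant `c < ‖f‖`. -/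
theorem nonarchimedean_chase_operator_norm_reduction
    {k : Type*} [DenselyNormedField k] [CompleteSpace k] [IsUltrametricDist k]
    {I J : Type u}
    (hI : ¬ IsOmegaOneMeasurable (Cardinal.mk I))
    (V : I → Type*) [∀ i, NormedAddCommGroup (V i)] [∀ i, NormedSpace k (V i)]
    [∀ i, CompleteSpace (V i)] [∀ i, IsUltrametricDist (V i)]
    (W : J → Type*) [∀ j, NormedAddCommGroup (W j)] [∀ j, NormedSpace k (W j)]
    [∀ j, CompleteSpace (W j)] [∀ j, IsUltrametricDist (W j)]
    (f : lp V ∞ →L[k] lp W ∞)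
    (hf_range : ∀ x : lp V ∞, ∀ ε > (0 : ℝ), {j : J | ε < ‖f x j‖}.Finite)
    (hf_ne : f ≠ 0) :
    ∃ I₀ : Set I, I₀.Finite ∧ ∃ J₀ : Set J, J₀.Finite ∧
      ∃ c : ℝ, 0 ≤ c ∧ c < ‖f‖ ∧
        ∀ x : lp V ∞, (∀ i ∈ I₀, x i = 0) →
          ∀ j ∉ J₀, ‖f x j‖ ≤ c * ‖x‖ :=
  nonarchimedean_chase_operator_norm_reduction_general hI f hf_range hf_ne
end
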